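/- arXiv:2001.09317 — 2 statements merged into one kernel-verified Lean document; each statement's English description precedes it below -/
import Mathlib

section
/- (Equation (11) in the proof of Lemma 4 of the paper.) With μ_I and μ_II the Case I and Case II schedules built from integers k ≥ 0, k1 ≥ 0, k2 ≥ 1 and a common schedule ν, and T = k + k1 + k2 + 1: for every integer m with k1+1 ≤ m ≤ k1+k2, A_{μ_I}(T−m) − A_{μ_II}(T−m) = (1−μ_min)^{k1+k2−m} · (μ_min − μ*) · A_ν(k), where A_ν(k) = ∑_{τ=0}^∞ ∏_{i=0}^{τ-1} (1 − ν(k−i)) is the expected AoI at slot k under the common prefix schedule ν. -/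
/-- The expected Age-of-Information at time-slot `t` under a per-slot
success-probability function `μ : ℤ → ℝ`: the series
`A_μ(t) = ∑_{τ=0}^∞ ∏_{i=0}^{τ-1} (1 − μ(t−i))`, where the `τ = 0` term
(the empty product) equals 1. -/
noncomputable def aoi (μ : ℤ → ℝ) (t : ℤ) : ℝ :=
  ∑' τ : ℕ, ∏ i ∈ Finset.range τ, (1 - μ (t - (i : ℤ)))

/-- Case I schedule: `ν(s)` for `s ≤ k`; `μ*` in slot `k+1`; the worst channel
`μ_min` in slots `k+2` to `k+k2+1`; the optimal channel `μ*` thereafter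
(in particular in slots `k+k2+2` to `T = k+k1+k2+1`). -/
noncomputable def caseI (μmin μstar : ℝ) (ν : ℤ → ℝ) (k k2 : ℕ) : ℤ → ℝ :=
  fun s =>
    if s ≤ (k : ℤ) then ν s
    else if s = (k : ℤ) + 1 then μstar
    else if s ≤ (k : ℤ) + (k2 : ℤ) + 1 then μmin
    else μstar

/-- Case II schedule: `ν(s)` for `s ≤ k`; the worst channel `μ_min` in slots
`k+1` to `k+k2`; the optimal channel `μ*` thereafter
(in particular in slots `k+k2+1` to `T = k+k1+k2+1`). -/
noncomputable def caseII (μmin μstar : ℝ) (ν : ℤ → ℝ) (k k2 : ℕ) : ℤ → ℝ :=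
  fun s =>
    if s ≤ (k : ℤ) then ν s
    else if s ≤ (k : ℤ) + (k2 : ℤ) then μmin
    else μstar

theorem aoi_step (μ : ℤ → ℝ) (c : ℝ) (hc : 0 < c) (hμ : ∀ s, c ≤ μ s ∧ μ s ≤ 1) (t : ℤ) :
    aoi μ (t + 1) = 1 + (1 - μ (t + 1)) * aoi μ t := by
  have hsum : ∀ t : ℤ, Summable (fun τ : ℕ => ∏ i ∈ Finset.range τ, (1 - μ (t - (i : ℤ)))) := by
    intro t
    have hc1 : c ≤ 1 := (hμ 0).1.trans (hμ 0).2
    refine Summable.of_nonneg_of_le (f := fun τ : ℕ => (1 - c) ^ τ) ?_ ?_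
      (summable_geometric_of_lt_one (by linarith) (by linarith))
    · intro τ
      exact Finset.prod_nonneg fun i _ => by linarith [(hμ (t - (i : ℤ))).2]
    · intro τ
      calc _ ≤ ∏ i ∈ Finset.range τ, (1 - c) :=
            Finset.prod_le_prod (fun i _ => by linarith [(hμ (t - (i : ℤ))).2])
              (fun i _ => by linarith [(hμ (t - (i : ℤ))).1])
        _ = (1 - c) ^ τ := by simp
  unfold aoi
  rw [(hsum (t + 1)).tsum_eq_zero_add, ← tsum_mul_left]
  congr 1
  apply tsum_congr
  intro τ
  rw [Finset.prod_range_succ', mul_comm]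
  congr 1
  · simp
  · refine Finset.prod_congr rfl fun i _ => ?_
    congr 2
    push_cast
    ring

theorem aoi_congr (μ ν : ℤ → ℝ) (t : ℤ) (h : ∀ s ≤ t, μ s = ν s) : aoi μ t = aoi ν t := by
  unfold aoi
  refine tsum_congr fun τ => Finset.prod_congr rfl fun i _ => ?_
  rw [h _ (by omega)]

/-- (Equation (11) in the proof of Lemma 4.) With `μ_I`, `μ_II` the Case I and
Case II schedules built from `k ≥ 0`, `k1 ≥ 0`, `k2 ≥ 1` and a common schedule
`ν`, and `T = k + k1 + k2 + 1`: for every `m` with `k1+1 ≤ m ≤ k1+k2`,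
`A_{μ_I}(T−m) − A_{μ_II}(T−m) = (1−μ_min)^{k1+k2−m} (μ_min − μ*) A_ν(k)`,
where `A_ν(k)` is the expected AoI at slot `k` under the common prefix `ν`. -/
theorem stmt_6 (μmin μstar : ℝ) (hμmin_pos : 0 < μmin) (hμ_le : μmin ≤ μstar)
    (hμstar_le : μstar ≤ 1) (k k1 k2 : ℕ) (hk2 : 1 ≤ k2)
    (ν : ℤ → ℝ) (hν : ∀ s : ℤ, μmin ≤ ν s ∧ ν s ≤ μstar)
    (m : ℕ) (hm₁ : k1 + 1 ≤ m) (hm₂ : m ≤ k1 + k2) :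
    aoi (caseI μmin μstar ν k k2) ((k : ℤ) + k1 + k2 + 1 - m) -
        aoi (caseII μmin μstar ν k k2) ((k : ℤ) + k1 + k2 + 1 - m) =
      (1 - μmin) ^ (k1 + k2 - m) * (μmin - μstar) * aoi ν k := by
  have hI : ∀ s, μmin ≤ caseI μmin μstar ν k k2 s ∧ caseI μmin μstar ν k k2 s ≤ 1 := by
    intro s
    have := hν s
    unfold caseI
    split_ifs <;> constructor <;> linarith
  have hII : ∀ s, μmin ≤ caseII μmin μstar ν k k2 s ∧ caseII μmin μstar ν k k2 s ≤ 1 := by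
    intro s
    have := hν s
    unfold caseII
    split_ifs <;> constructor <;> linarith
  have key : ∀ n : ℕ, n + 1 ≤ k2 →
      aoi (caseI μmin μstar ν k k2) ((k : ℤ) + n + 1) -
        aoi (caseII μmin μstar ν k k2) ((k : ℤ) + n + 1) =
      (1 - μmin) ^ n * (μmin - μstar) * aoi ν k := by
    intro n
    induction n with
    | zero =>
      intro hn
      rw [aoi_step _ μmin hμmin_pos hI, aoi_step _ μmin hμmin_pos hII]
      have e1 : caseI μmin μstar ν k k2 ((k : ℤ) + (0 : ℕ) + 1) = μstar := by
        simp [caseI]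
      have e2 : caseII μmin μstar ν k k2 ((k : ℤ) + (0 : ℕ) + 1) = μmin := by
        unfold caseII
        rw [if_neg (by omega), if_pos (by omega)]
      rw [e1, e2, aoi_congr (caseI μmin μstar ν k k2) ν, aoi_congr (caseII μmin μstar ν k k2) ν]
      · simp
        ring
      · intro s hs
        unfold caseII
        rw [if_pos (by omega)]
      · intro s hs
        unfold caseI
        rw [if_pos (by omega)]
    | succ n ih =>
      intro hn
      have ih := ih (by omega)
      rw [aoi_step _ μmin hμmin_pos hI, aoi_step _ μmin hμmin_pos hII]
      have e1 : caseI μmin μstar ν k k2 ((k : ℤ) + (n + 1 : ℕ) + 1) = μmin := by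
        unfold caseI
        rw [if_neg (by omega), if_neg (by omega), if_pos (by omega)]
      have e2 : caseII μmin μstar ν k k2 ((k : ℤ) + (n + 1 : ℕ) + 1) = μmin := by
        unfold caseII
        rw [if_neg (by omega), if_pos (by omega)]
      have e3 : (k : ℤ) + (n + 1 : ℕ) = (k : ℤ) + n + 1 := by push_cast; ring
      rw [e1, e2, e3, pow_succ]
      linear_combination (1 - μmin) * ih
  have e : (k : ℤ) + k1 + k2 + 1 - m = (k : ℤ) + (k1 + k2 - m : ℕ) + 1 := by omega
  rw [e]
  exact key _ (by omega)
end

section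
/- (Lemma 5 of the paper, rearrangement to Schedule B.) Fix reals μ_min and μ* with 0 < μ_min ≤ μ* ≤ 1, let μ : ℤ → ℝ be a schedule (μ_min ≤ μ(s) ≤ μ* for all s), let T ≥ 1 be an integer, and let n = #{t ∈ {1, …, T} : μ(t) ≠ μ*} be the number of slots in {1, …, T} in which a sub-optimal channel is used. Define the Schedule-B function μ_B by μ_B(s) = μ(s) for s ≤ 0, μ_B(s) = μ_min for 1 ≤ s ≤ n, and μ_B(s) = μ* for n+1 ≤ s ≤ T. Then ∑_{t=1}^{T} A_μ(t) ≤ ∑_{t=1}^{T} A_{μ_B}(t). -/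
def auxG (g : ℝ) : ℕ → ℝ → ℝ
  | 0, _ => 0
  | k + 1, a => (1 + g * a) + auxG g k (1 + g * a)

def auxW (b g : ℝ) : ℕ → ℕ → ℝ → ℝ
  | 0, k, a => auxG g k a
  | m + 1, k, a => (1 + b * a) + auxW b g m k (1 + b * a)

def auxSG (g : ℝ) : ℕ → ℝ
  | 0 => 0
  | k + 1 => g + g * auxSG g k

def auxS (b g : ℝ) : ℕ → ℕ → ℝ
  | 0, k => auxSG g k
  | m + 1, k => b + b * auxS b g m k

theorem auxG_affine (g : ℝ) (k : ℕ) : ∀ a c : ℝ,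
    auxG g k a = auxG g k c + (a - c) * auxSG g k := by
  induction k with
  | zero => intro a c; simp [auxG, auxSG]
  | succ k ih =>
    intro a c
    simp only [auxG, auxSG]
    rw [ih (1 + g * a) (1 + g * c)]
    ring

theorem auxW_affine (b g : ℝ) (k m : ℕ) : ∀ a c : ℝ,
    auxW b g m k a = auxW b g m k c + (a - c) * auxS b g m k := by
  induction m with
  | zero => intro a c; simpa [auxW, auxS] using auxG_affine g k a c
  | succ m ih =>
    intro a c
    simp only [auxW, auxS]
    rw [ih (1 + b * a) (1 + b * c)]
    ring

theorem auxSG_nonneg (g : ℝ) (hg : 0 ≤ g) (k : ℕ) : 0 ≤ auxSG g k := by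
  induction k with
  | zero => simp [auxSG]
  | succ k ih => simp only [auxSG]; positivity

theorem auxS_nonneg (b g : ℝ) (hg : 0 ≤ g) (hb : 0 ≤ b) (k m : ℕ) : 0 ≤ auxS b g m k := by
  induction m with
  | zero => exact auxSG_nonneg g hg k
  | succ k ih => simp only [auxS]; positivity

theorem auxS_step (b g : ℝ) (hb : 0 ≤ b) (hgb : g ≤ b) (k m : ℕ) :
    g + g * auxS b g m k ≤ auxS b g m (k + 1) := by
  induction m with
  | zero => simp [auxS, auxSG]
  | succ m ih =>
    simp only [auxS]
    nlinarith [mul_le_mul_of_nonneg_left ih hb]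

theorem auxG_succ (g c : ℝ) (hg : 0 ≤ g) (hc : c = 1 + g * c) (k : ℕ) : ∀ a, c ≤ a →
    c + auxG g k a ≤ auxG g (k + 1) a := by
  induction k with
  | zero => intro a ha; simp only [auxG]; nlinarith
  | succ k ih =>
    intro a ha
    have := ih (1 + g * a) (by nlinarith)
    rw [auxG, auxG.eq_2 g a (k + 1)]
    linarith

theorem auxW_succ (b g c : ℝ) (hg : 0 ≤ g) (hgb : g ≤ b) (hc0 : 0 ≤ c) (hc : c = 1 + g * c)
    (k m : ℕ) : ∀ a, c ≤ a → c + auxW b g m k a ≤ auxW b g m (k + 1) a := by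
  induction m with
  | zero => exact auxG_succ g c hg hc k
  | succ m ih =>
    intro a ha
    have := ih (1 + b * a) (by nlinarith [mul_le_mul hgb ha hc0 (hg.trans hgb)])
    simp only [auxW]
    linarith

theorem auxW_swap (b g c : ℝ) (hg : 0 ≤ g) (hgb : g ≤ b) (hc0 : 0 ≤ c) (hc : c = 1 + g * c)
    (k m : ℕ) (a : ℝ) (ha : c ≤ a) :
    (1 + g * a) + auxW b g m k (1 + g * a) ≤ auxW b g m (k + 1) a := by
  rw [auxW_affine b g k m (1 + g * a) c, auxW_affine b g (k + 1) m a c]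
  have h1 := auxW_succ b g c hg hgb hc0 hc k m c le_rfl
  have h2 := mul_le_mul_of_nonneg_left (auxS_step b g (hg.trans hgb) hgb k m)
    (sub_nonneg.2 ha)
  have h3 : 1 + g * a - c = g * (a - c) := by linear_combination hc * (-1)
  rw [h3]
  nlinarith

theorem aoi_summable (μmin : ℝ) (h0 : 0 < μmin) (μ : ℤ → ℝ)
    (hμ : ∀ s : ℤ, μmin ≤ μ s ∧ μ s ≤ 1) (t : ℤ) :
    Summable (fun τ : ℕ => ∏ i ∈ Finset.range τ, (1 - μ (t - (i : ℤ)))) := by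
  have h1 : μmin ≤ 1 := (hμ 0).1.trans (hμ 0).2
  refine Summable.of_nonneg_of_le
    (fun τ => Finset.prod_nonneg fun i _ => by linarith [(hμ (t - i)).2]) (fun τ => ?_)
    (summable_geometric_of_lt_one (r := 1 - μmin) (by linarith) (by linarith))
  calc _ ≤ ∏ i ∈ Finset.range τ, (1 - μmin) :=
        Finset.prod_le_prod (fun i _ => by linarith [(hμ (t - i)).2])
          (fun i _ => by linarith [(hμ (t - i)).1])
    _ = _ := by simp

theorem aoi_rec (μmin : ℝ) (h0 : 0 < μmin) (μ : ℤ → ℝ)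
    (hμ : ∀ s : ℤ, μmin ≤ μ s ∧ μ s ≤ 1) (t : ℤ) :
    aoi μ (t + 1) = 1 + (1 - μ (t + 1)) * aoi μ t := by
  unfold aoi
  rw [(aoi_summable μmin h0 μ hμ (t + 1)).tsum_eq_zero_add, ← tsum_mul_left]
  simp only [Finset.range_zero, Finset.prod_empty]
  congr 1
  refine tsum_congr fun τ => ?_
  rw [Finset.prod_range_succ', mul_comm]
  congr 1
  · simp
  · refine Finset.prod_congr rfl fun i _ => ?_
    congr 2
    push_cast
    ring

theorem aoi_lower (μmin μstar : ℝ) (h0 : 0 < μmin) (h1 : μstar ≤ 1) (μ : ℤ → ℝ)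
    (hμ : ∀ s : ℤ, μmin ≤ μ s ∧ μ s ≤ μstar) (t : ℤ) : μstar⁻¹ ≤ aoi μ t := by
  have hs : 0 < μstar := h0.trans_le ((hμ 0).1.trans (hμ 0).2)
  have h2 : μstar⁻¹ = ∑' τ : ℕ, (1 - μstar) ^ τ := by
    rw [tsum_geometric_of_lt_one (by linarith) (by linarith)]
    congr 1; ring
  rw [h2]
  refine Summable.tsum_le_tsum (fun τ => ?_)
    (summable_geometric_of_lt_one (by linarith) (by linarith))
    (aoi_summable μmin h0 μ (fun s => ⟨(hμ s).1, (hμ s).2.trans h1⟩) t)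
  calc (1 - μstar) ^ τ = ∏ i ∈ Finset.range τ, (1 - μstar) := by simp
    _ ≤ _ := Finset.prod_le_prod (fun i _ => by linarith)
          (fun i _ => by linarith [(hμ (t - i)).2])

theorem sum_shift (f : ℤ → ℝ) (s : ℤ) (N : ℕ) :
    ∑ i ∈ Finset.range (N + 1), f (s + 1 + i)
      = f (s + 1) + ∑ i ∈ Finset.range N, f (s + 1 + 1 + i) := by
  rw [Finset.sum_range_succ', add_comm]
  congr 1
  · simp
  · refine Finset.sum_congr rfl fun i _ => ?_
    congr 1; push_cast; ring

theorem upper (μmin μstar : ℝ) (h0 : 0 < μmin) (hle : μmin ≤ μstar) (h1 : μstar ≤ 1) (μ : ℤ → ℝ)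
    (hμ : ∀ s : ℤ, μmin ≤ μ s ∧ μ s ≤ μstar) (N : ℕ) : ∀ s : ℤ, ∃ m k : ℕ, m + k = N ∧
    (m : ℝ) = ∑ i ∈ Finset.range N, (fun t : ℤ => if μ t ≠ μstar then (1 : ℝ) else 0) (s + 1 + i) ∧
    ∑ i ∈ Finset.range N, aoi μ (s + 1 + i) ≤ auxW (1 - μmin) (1 - μstar) m k (aoi μ s) := by
  have hs : 0 < μstar := h0.trans_le hle
  have hc0 : 0 ≤ μstar⁻¹ := by positivity
  have hc : μstar⁻¹ = 1 + (1 - μstar) * μstar⁻¹ := by field_simp; ring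
  induction N with
  | zero => intro s; exact ⟨0, 0, by simp [auxW, auxG]⟩
  | succ N ih =>
    intro s
    obtain ⟨m, k, hmk, hm, hW⟩ := ih (s + 1)
    have hrec := aoi_rec μmin h0 μ (fun s => ⟨(hμ s).1, (hμ s).2.trans h1⟩) s
    have hlow := aoi_lower μmin μstar h0 h1 μ hμ s
    by_cases h : μ (s + 1) = μstar
    · refine ⟨m, k + 1, by omega, ?_, ?_⟩
      · refine Eq.trans ?_ (sum_shift (fun t : ℤ => if μ t ≠ μstar then (1 : ℝ) else 0) s N).symm
        rw [← hm]; simp [h]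
      · rw [sum_shift (aoi μ)]
        refine le_trans ?_ (auxW_swap (1 - μmin) (1 - μstar) μstar⁻¹ (by linarith)
          (by linarith) hc0 hc k m _ hlow)
        rw [h] at hrec
        rw [← hrec]
        linarith
    · refine ⟨m + 1, k, by omega, ?_, ?_⟩
      · refine Eq.trans ?_ (sum_shift (fun t : ℤ => if μ t ≠ μstar then (1 : ℝ) else 0) s N).symm
        rw [← hm]; simp [h, add_comm]
      · rw [sum_shift (aoi μ)]
        simp only [auxW]
        have hy : aoi μ (s + 1) ≤ 1 + (1 - μmin) * aoi μ s := by
          rw [hrec]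
          have := mul_le_mul_of_nonneg_right (hμ (s + 1)).1 (hc0.trans hlow)
          linarith
        rw [auxW_affine _ _ _ _ _ (aoi μ (s + 1))]
        have := mul_nonneg (sub_nonneg.2 hy)
          (auxS_nonneg (1 - μmin) (1 - μstar) (by linarith) (by linarith) k m)
        linarith

theorem exactG (μmin μstar : ℝ) (h0 : 0 < μmin) (μ : ℤ → ℝ)
    (hμ : ∀ s : ℤ, μmin ≤ μ s ∧ μ s ≤ 1) (k : ℕ) : ∀ s : ℤ, (∀ t, s < t → μ t = μstar) →
    ∑ i ∈ Finset.range k, aoi μ (s + 1 + i) = auxG (1 - μstar) k (aoi μ s) := by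
  induction k with
  | zero => intro s _; simp [auxG]
  | succ k ih =>
    intro s hs
    rw [sum_shift (aoi μ), ih (s + 1) (fun t ht => hs t (by omega)), auxG,
      aoi_rec μmin h0 μ hμ s, hs (s + 1) (by omega)]

theorem exactW (μmin μstar : ℝ) (h0 : 0 < μmin) (μ : ℤ → ℝ)
    (hμ : ∀ s : ℤ, μmin ≤ μ s ∧ μ s ≤ 1) (k m : ℕ) : ∀ s : ℤ,
    (∀ t, s < t → t ≤ s + m → μ t = μmin) → (∀ t, s + m < t → μ t = μstar) →
    ∑ i ∈ Finset.range (m + k), aoi μ (s + 1 + i)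
      = auxW (1 - μmin) (1 - μstar) m k (aoi μ s) := by
  induction m with
  | zero =>
    intro s _ hs
    rw [zero_add]
    exact exactG μmin μstar h0 μ hμ k s (fun t ht => hs t (by simpa using ht))
  | succ m ih =>
    intro s hs hs'
    rw [show m + 1 + k = m + k + 1 by ring, sum_shift (aoi μ),
      ih (s + 1) (fun t ht ht' => hs t (by omega) (by push_cast; omega))
        (fun t ht => hs' t (by push_cast; omega)), auxW,
      aoi_rec μmin h0 μ hμ s, hs (s + 1) (by omega) (by push_cast; omega)]

theorem sum_Icc_range (f : ℤ → ℝ) (N : ℕ) :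
    ∑ t ∈ Finset.Icc (1 : ℤ) N, f t = ∑ i ∈ Finset.range N, f (0 + 1 + i) := by
  symm
  refine Finset.sum_bij (fun i _ => (0 + 1 + i : ℤ)) ?_ ?_ ?_ ?_
  · intro i hi; simp at hi ⊢; omega
  · intro i _ j _ h; simpa using h
  · intro t ht
    simp only [Finset.mem_Icc] at ht
    exact ⟨(t - 1).toNat, by simp; omega, by omega⟩
  · intros; rfl

/-- (Lemma 5, rearrangement to Schedule B.) Fix `0 < μ_min ≤ μ* ≤ 1`, let `μ`
be a schedule, `T ≥ 1`, and let `n` be the number of slots in `{1,…,T}` in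
which a sub-optimal channel is used. Schedule B keeps `μ` on slots `s ≤ 0`,
uses the worst channel `μ_min` in slots `1` to `n`, and the optimal channel
`μ*` thereafter. Then `∑_{t=1}^{T} A_μ(t) ≤ ∑_{t=1}^{T} A_{μ_B}(t)`. -/
theorem stmt_8 (μmin μstar : ℝ) (hμmin_pos : 0 < μmin) (hμ_le : μmin ≤ μstar)
    (hμstar_le : μstar ≤ 1)
    (μ : ℤ → ℝ) (hμ : ∀ s : ℤ, μmin ≤ μ s ∧ μ s ≤ μstar)
    (T : ℤ) (hT : 1 ≤ T)
    (n : ℕ) (hn : n = ((Finset.Icc (1 : ℤ) T).filter (fun t => μ t ≠ μstar)).card)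
    (μB : ℤ → ℝ)
    (hB : ∀ s : ℤ, μB s = if s ≤ 0 then μ s else if s ≤ (n : ℤ) then μmin else μstar) :
    ∑ t ∈ Finset.Icc (1 : ℤ) T, aoi μ t ≤ ∑ t ∈ Finset.Icc (1 : ℤ) T, aoi μB t := by
  obtain ⟨N, rfl⟩ := Int.eq_ofNat_of_zero_le (show 0 ≤ T by omega)
  obtain ⟨m, k, hmk, hm, hW⟩ := upper μmin μstar hμmin_pos hμ_le hμstar_le μ hμ N 0
  have hnm : m = n := by
    replace hm := hm.trans (sum_Icc_range (fun t : ℤ => if μ t ≠ μstar then (1 : ℝ) else 0) N).symm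
    rw [Finset.sum_boole, ← hn] at hm
    exact_mod_cast hm
  subst hnm
  have hBb : ∀ s : ℤ, μmin ≤ μB s ∧ μB s ≤ 1 := by
    intro s
    rw [hB]
    have := hμ s
    split_ifs <;> constructor <;> linarith
  have hA : aoi μB 0 = aoi μ 0 := by
    unfold aoi
    refine tsum_congr fun τ => Finset.prod_congr rfl fun i _ => ?_
    rw [hB, if_pos (by omega)]
  have hE := exactW μmin μstar hμmin_pos μB hBb k m 0
    (fun t h h' => by rw [hB, if_neg (by omega), if_pos (by omega)])
    (fun t h => by rw [hB, if_neg (by omega), if_neg (by omega)])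
  rw [sum_Icc_range, sum_Icc_range, ← hmk, hE, hA, hmk]
  exact hW
end
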